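/- arXiv:2211.04545 — 2 statements merged into one kernel-verified Lean document; each statement's English description precedes it below -/
import Mathlib

section
/- The diagonal action of S_5 on CO_5 × CO_5, given by σ • (x, y) = (σ • x, σ • y), has exactly 8 orbits. (Hence any neutral points-based rule on CO_5 where ballots are a single cyclic order depends on eight parameters.) -/
/-- The set of cyclic orders on `Fin n`: the left cosets of the cyclic subgroup
generated by the natural `n`-cycle `i ↦ i + 1` in the symmetric group. -/
abbrev CO (n : ℕ) := Equiv.Perm (Fin n) ⧸ Subgroup.zpowers (finRotate n)

/-!
Write `H = ⟨c⟩`. Since `S_n` is transitive on `S_n ⧸ H` with point stabilizer `H`, its orbits on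
pairs of cosets are the orbits of `H` on `S_n ⧸ H`, which Burnside's lemma counts. The cosets `x H`
fixed by `h ∈ H` are those with `x⁻¹ h x ∈ H`, so for each `h` there are
`|C(h)| · #{k ∈ H | k conjugate to h} / |H|` of them. As `H` acts freely on `Fin n`, an element of
order `d` is a product of `n / d` disjoint `d`-cycles. Hence two elements of `H` are conjugate in
`S_n` exactly when they have the same order, and `|C(h)| = d ^ (n / d) * (n / d)!`. There are
`φ d` elements of order `d`, so `n ^ 2` times the number of orbits is the sum of
`φ d ^ 2 * d ^ (n / d) * (n / d)!` over the divisors `d` of `n`; for `n = 5` it is `120 + 80`.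
-/

open MulAction Equiv.Perm
open scoped Nat

section Orbits

variable {G X : Type*} [Group G] [MulAction G X]

theorem card_setOf_smul_mem (a : X) (S : Set X) :
    Nat.card {g : G | g • a ∈ S} = Nat.card (stabilizer G a) * Nat.card ↥(S ∩ orbit G a) := by
  have image_eq : ofQuotientStabilizer G a '' (ofQuotientStabilizer G a ⁻¹' S) = S ∩ orbit G a := by
    rw [Set.image_preimage_eq_inter_range]
    congr 1
    ext x
    exact QuotientGroup.mk_surjective.exists
  rw [← image_eq, Nat.card_image_of_injective (injective_ofQuotientStabilizer G a),
    ← Nat.card_prod]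
  exact Nat.card_congr <|
    QuotientGroup.preimageMkEquivSubgroupProdSet _ (ofQuotientStabilizer G a ⁻¹' S)

theorem card_mul_card_fixedBy_quotient (K : Subgroup G) (g : G) :
    Nat.card K * Nat.card (fixedBy (G ⧸ K) g) = Nat.card {x : G | x⁻¹ * g * x ∈ K} := by
  have fixed_iff (x : G) : x • ((1 : G) : G ⧸ K) ∈ fixedBy (G ⧸ K) g ↔ x⁻¹ * g * x ∈ K := by
    rw [mem_fixedBy, eq_comm, Quotient.smul_coe, Quotient.smul_coe, QuotientGroup.eq]
    simp [mul_assoc]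
  simpa only [fixed_iff, stabilizer_quotient, orbit_eq_univ, Set.inter_univ] using
    (card_setOf_smul_mem (G := G) ((1 : G) : G ⧸ K) (fixedBy (G ⧸ K) g)).symm

theorem card_setOf_conj_mem (g : G) (S : Set G) :
    Nat.card {x : G | x⁻¹ * g * x ∈ S} =
      Nat.card (Subgroup.centralizer {g}) * Nat.card {k | k ∈ S ∧ IsConj g k} := by
  have inter_orbit : S ∩ orbit (ConjAct G) g = {k | k ∈ S ∧ IsConj g k} := by
    ext k
    exact and_congr_right fun _ ↦ ConjAct.mem_orbit_conjAct.trans isConj_comm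
  calc
    _ = Nat.card {x : ConjAct G | x • g ∈ S} :=
      Nat.card_congr <| ((Equiv.inv G).trans ConjAct.toConjAct.toEquiv).subtypeEquiv fun x ↦ by
        simp [ConjAct.smul_def]
    _ = _ := by
      rw [card_setOf_smul_mem, inter_orbit, ConjAct.stabilizer_eq_centralizer]
      rfl

theorem card_orbits_quotient_prod (H : Subgroup G) :
    Nat.card (orbitRel.Quotient G ((G ⧸ H) × X)) = Nat.card (orbitRel.Quotient H X) := by
  have mem_orbit_iff (x y : X) :
      x ∈ orbit H y ↔ (((1 : G) : G ⧸ H), x) ∈ orbit G (((1 : G) : G ⧸ H), y) := by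
    simp only [mem_orbit_iff, Subtype.exists, Prod.smul_mk, Prod.mk.injEq,
      ← mem_stabilizer_iff, stabilizer_quotient, Subgroup.mk_smul, exists_prop]
  let f : orbitRel.Quotient H X → orbitRel.Quotient G ((G ⧸ H) × X) :=
    Quotient.map' (fun x ↦ (((1 : G) : G ⧸ H), x)) fun x y ↦ (mem_orbit_iff x y).1
  refine (Nat.card_eq_of_bijective f ⟨?_, ?_⟩).symm
  · rintro ⟨x⟩ ⟨y⟩ hxy
    exact Quotient.sound' ((mem_orbit_iff x y).2 (Quotient.exact hxy))
  · rintro ⟨⟨⟨g⟩, x⟩⟩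
    refine ⟨Quotient.mk'' (g⁻¹ • x), Quotient.sound' ⟨g⁻¹, Prod.ext ?_ rfl⟩⟩
    exact congrArg QuotientGroup.mk (inv_mul_cancel g)

theorem card_mul_card_orbits_quotient_prod [Finite X] (H : Subgroup G) [Fintype H] :
    Nat.card H * Nat.card (orbitRel.Quotient G ((G ⧸ H) × X)) =
      ∑ h : H, Nat.card (fixedBy X (h : G)) := by
  classical
  have := Fintype.ofFinite X
  have burnside := sum_card_fixedBy_eq_card_orbits_mul_card_group H X
  simp only [← Nat.card_eq_fintype_card] at burnside
  rw [card_orbits_quotient_prod, mul_comm, ← burnside]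
  rfl

theorem card_mul_card_orbits_quotient_prod_quotient [Finite G] (H K : Subgroup G) [Fintype H] :
    Nat.card H * Nat.card K * Nat.card (orbitRel.Quotient G ((G ⧸ H) × (G ⧸ K))) =
      ∑ h : H, Nat.card (Subgroup.centralizer {(h : G)}) *
        Nat.card {k | k ∈ K ∧ IsConj (h : G) k} := by
  rw [mul_right_comm, card_mul_card_orbits_quotient_prod, mul_comm, Finset.mul_sum]
  refine Finset.sum_congr rfl fun h _ ↦ ?_
  rw [card_mul_card_fixedBy_quotient]
  exact card_setOf_conj_mem (h : G) K

end Orbits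

theorem sum_orderOf_eq_sum_divisors {C M : Type*} [Group C] [IsCyclic C] [Fintype C]
    [AddCommMonoid M] (f : ℕ → M) :
    ∑ x : C, f (orderOf x) = ∑ d ∈ (Nat.card C).divisors, φ d • f d := by
  have orderOf_mem (x : C) (_ : x ∈ Finset.univ) : orderOf x ∈ (Nat.card C).divisors :=
    Nat.mem_divisors.2 ⟨orderOf_dvd_natCard x, Nat.card_pos.ne'⟩
  rw [← Finset.sum_fiberwise_of_maps_to' orderOf_mem]
  refine Finset.sum_congr rfl fun d hd ↦ ?_
  rw [Finset.sum_const, IsCyclic.card_orderOf_eq_totient]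
  exact Nat.card_eq_fintype_card (α := C) ▸ Nat.dvd_of_mem_divisors hd

namespace FreePermGroup

-- `IsCancelSMul H α` says that `H` acts freely: only the identity of `H` has fixed points.
variable {α : Type*} {H : Subgroup (Equiv.Perm α)} [IsCancelSMul H α] {h k : Equiv.Perm α}

theorem eq_one_of_apply_eq_self (hh : h ∈ H) {x : α} (hx : h x = x) : h = 1 :=
  congrArg Subtype.val (IsCancelSMul.eq_one_of_smul (g := (⟨h, hh⟩ : H)) hx)

section CycleType

variable [Fintype α] [DecidableEq α]

theorem support_eq_univ_of_ne_one (hh : h ∈ H) (h_ne : h ≠ 1) : h.support = Finset.univ :=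
  Finset.eq_univ_of_forall fun _ ↦ mem_support.2 fun hx ↦ h_ne (eq_one_of_apply_eq_self hh hx)

theorem eq_orderOf_of_mem_cycleType (hh : h ∈ H) {m : ℕ} (hm : m ∈ h.cycleType) :
    m = orderOf h := by
  refine Nat.dvd_antisymm (dvd_of_mem_cycleType hm) (orderOf_dvd_of_pow_eq_one ?_)
  obtain ⟨c, τ, rfl, disj, hc, rfl⟩ := mem_cycleType_iff.1 hm
  obtain ⟨x, hx⟩ := hc.nonempty_support
  have τ_fixes : τ x = x := (disj x).resolve_left (mem_support.1 hx)
  have pow_fixes : ((c * τ) ^ c.support.card) x = x := by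
    rw [disj.commute.mul_pow, mul_apply, pow_apply_eq_self_of_apply_eq_self τ_fixes,
      ← hc.orderOf, pow_orderOf_eq_one, one_apply]
  exact eq_one_of_apply_eq_self (H.pow_mem hh _) pow_fixes

theorem cycleType_eq_replicate_orderOf (hh : h ∈ H) (h_ne : h ≠ 1) :
    h.cycleType = Multiset.replicate (Fintype.card α / orderOf h) (orderOf h) := by
  have cycleType_eq : h.cycleType = Multiset.replicate h.cycleType.card (orderOf h) :=
    Multiset.eq_replicate_card.2 fun _ ↦ eq_orderOf_of_mem_cycleType hh
  have card_eq : Fintype.card α = h.cycleType.card * orderOf h := calc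
    _ = h.cycleType.sum := by
      rw [sum_cycleType, support_eq_univ_of_ne_one hh h_ne, Finset.card_univ]
    _ = _ := by
      conv_lhs => rw [cycleType_eq, Multiset.sum_replicate, smul_eq_mul]
  rwa [card_eq, Nat.mul_div_cancel _ (orderOf_pos h)]

end CycleType

theorem isConj_iff_orderOf_eq [Finite α] (hh : h ∈ H) (hk : k ∈ H) :
    IsConj h k ↔ orderOf h = orderOf k := by
  classical
  have := Fintype.ofFinite α
  rw [isConj_iff_cycleType_eq]
  refine ⟨fun hhk ↦ by rw [← lcm_cycleType, hhk, lcm_cycleType], fun hhk ↦ ?_⟩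
  by_cases h_eq : h = 1
  · have k_eq : k = 1 := by rwa [h_eq, orderOf_one, eq_comm, orderOf_eq_one_iff] at hhk
    rw [h_eq, k_eq]
  · have k_ne : k ≠ 1 := by rwa [Ne, ← orderOf_eq_one_iff, ← hhk, orderOf_eq_one_iff]
    rw [cycleType_eq_replicate_orderOf hh h_eq, cycleType_eq_replicate_orderOf hk k_ne, hhk]

theorem card_centralizer_eq [Fintype α] (hh : h ∈ H) :
    Nat.card (Subgroup.centralizer {h}) =
      orderOf h ^ (Fintype.card α / orderOf h) * (Fintype.card α / orderOf h)! := by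
  classical
  rw [nat_card_centralizer]
  by_cases h_eq : h = 1
  · simp [h_eq]
  · have cycleType_eq := cycleType_eq_replicate_orderOf hh h_eq
    have sum_eq : h.cycleType.sum = Fintype.card α := by
      rw [sum_cycleType, support_eq_univ_of_ne_one hh h_eq, Finset.card_univ]
    have card_ne : Fintype.card α / orderOf h ≠ 0 := fun h_zero ↦
      h_eq (cycleType_eq_zero.1 (by rw [cycleType_eq, h_zero, Multiset.replicate_zero]))
    rw [sum_eq, cycleType_eq, Multiset.prod_replicate, Multiset.toFinset_replicate]
    simp [card_ne]

theorem card_isConj_eq_totient [Finite α] [IsCyclic H] (hh : h ∈ H) :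
    Nat.card {k | k ∈ H ∧ IsConj h k} = φ (orderOf h) := by
  have := Fintype.ofFinite H
  have orderOf_dvd : orderOf h ∣ Fintype.card H :=
    Nat.card_eq_fintype_card (α := H) ▸ H.orderOf_dvd_natCard hh
  rw [← IsCyclic.card_orderOf_eq_totient orderOf_dvd, ← Fintype.card_subtype,
    ← Nat.card_eq_fintype_card]
  exact Nat.card_congr <| (Equiv.subtypeSubtypeEquivSubtypeInter _ _).symm.trans <|
    Equiv.subtypeEquivRight fun k ↦ by
      rw [isConj_iff_orderOf_eq hh k.2, eq_comm, Subgroup.orderOf_coe]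

theorem card_sq_mul_card_orbits_quotient_prod_quotient [Fintype α]
    (H : Subgroup (Equiv.Perm α)) [IsCancelSMul H α] [IsCyclic H] :
    Nat.card H ^ 2 * Nat.card (orbitRel.Quotient (Equiv.Perm α)
      ((Equiv.Perm α ⧸ H) × (Equiv.Perm α ⧸ H))) =
      ∑ d ∈ (Nat.card H).divisors,
        φ d ^ 2 * d ^ (Fintype.card α / d) * (Fintype.card α / d)! := by
  classical
  rw [sq, card_mul_card_orbits_quotient_prod_quotient]
  simp only [card_centralizer_eq (Subtype.property _), card_isConj_eq_totient (Subtype.property _),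
    Subgroup.orderOf_coe]
  rw [sum_orderOf_eq_sum_divisors fun d ↦
    d ^ (Fintype.card α / d) * (Fintype.card α / d)! * φ d]
  refine Finset.sum_congr rfl fun d _ ↦ ?_
  rw [smul_eq_mul]
  ring

end FreePermGroup

theorem isCancelSMul_zpowers_of_isCycleOn_univ {α : Type*} [Finite α] {c : Equiv.Perm α}
    (hc : c.IsCycleOn Set.univ) : IsCancelSMul (Subgroup.zpowers c) α where
  right_cancel' := by
    have := Fintype.ofFinite α
    rw [← Finset.coe_univ] at hc
    rintro ⟨_, i, rfl⟩ ⟨_, j, rfl⟩ x hij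
    have modEq := (hc.zpow_apply_eq_zpow_apply (Finset.mem_univ x)).1 hij
    exact Subtype.ext <| Equiv.ext fun y ↦
      (hc.zpow_apply_eq_zpow_apply (Finset.mem_univ y)).2 modEq

theorem isCycleOn_finRotate (n : ℕ) : (finRotate n).IsCycleOn Set.univ := by
  match n with
  | 0 | 1 => exact isCycleOn_of_subsingleton _ _
  | n + 2 =>
    simpa [← mem_support, support_finRotate] using (isCycle_finRotate (n := n)).isCycleOn

theorem orderOf_finRotate (n : ℕ) [NeZero n] : orderOf (finRotate n) = n := by
  match n, NeZero.ne n with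
  | 1, _ => rw [finRotate_one, ← Equiv.Perm.one_def, orderOf_one]
  | n + 2, _ => rw [isCycle_finRotate.orderOf, support_finRotate, Finset.card_fin]

theorem stmt_13_general (n : ℕ) [NeZero n] :
    n ^ 2 * Nat.card (MulAction.orbitRel.Quotient (Equiv.Perm (Fin n)) (CO n × CO n)) =
      ∑ d ∈ n.divisors, φ d ^ 2 * d ^ (n / d) * (n / d)! := by
  have := isCancelSMul_zpowers_of_isCycleOn_univ (isCycleOn_finRotate n)
  simpa only [Nat.card_zpowers, orderOf_finRotate, Fintype.card_fin] using
    FreePermGroup.card_sq_mul_card_orbits_quotient_prod_quotient (Subgroup.zpowers (finRotate n))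

theorem stmt_13 :
    Nat.card (MulAction.orbitRel.Quotient (Equiv.Perm (Fin 5)) (CO 5 × CO 5)) = 8 := by
  have sum_eq : ∑ d ∈ Nat.divisors 5, φ d ^ 2 * d ^ (5 / d) * (5 / d)! = 5 ^ 2 * 8 := by decide
  exact Nat.eq_of_mul_eq_mul_left (by norm_num) ((stmt_13_general 5).trans sum_eq)
end

section
/- Fix x ∈ ℚ and cyclic orders y₀, y₁ ∈ CO_4 with successor permutations τ₀, τ₁, such that y₁ is neither y₀ nor the reversal of y₀. Define a profile p on ROLO ballots by: p(b) = 1 if b = (a, τ₀⁻¹(a), τ₀(a)) or b = (a, τ₀(a), τ₀⁻¹(a)) for some a ∈ Fin 4 (the eight ballots fully matching y₀ or its reversal); p(b) = −1 if b = (a, τ₁⁻¹(a), τ₁(a)) or b = (a, τ₁(a), τ₁⁻¹(a)) for some a ∈ Fin 4; and p(b) = 0 otherwise. Then for every cyclic order y ∈ CO_4, the total score Σ_b p(b)·s_x(b, y) equals 4(x−1) if y ∈ {y₀, rev(y₀)}, equals −4(x−1) if y ∈ {y₁, rev(y₁)}, and equals 0 for the remaining reversal pair. -/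
/-- A ROLO ballot: a triple `(a, r, l)` of pairwise distinct elements of `Fin 4`
(`r` immediately to the right of `a`, `l` immediately to the left of `a`). -/
abbrev Ballot :=
  {t : Fin 4 × Fin 4 × Fin 4 // t.1 ≠ t.2.1 ∧ t.1 ≠ t.2.2 ∧ t.2.1 ≠ t.2.2}

/-- The successor permutation of a cyclic order `gH` is `g * c * g⁻¹`. -/
def succPerm (x : CO 4) : Equiv.Perm (Fin 4) :=
  Quotient.liftOn' x (fun g => g * finRotate 4 * g⁻¹) (by
    intro g g' hgg'
    rw [QuotientGroup.leftRel_apply] at hgg'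
    obtain ⟨k, hk⟩ := hgg'
    simp only at hk ⊢
    have h1 : g' = g * finRotate 4 ^ k := by rw [hk, mul_inv_cancel_left]
    subst h1
    have hc : Commute (finRotate 4 ^ k) (finRotate 4) :=
      (Commute.refl (finRotate 4)).zpow_left k
    have key : (finRotate 4 ^ k) * finRotate 4 * (finRotate 4 ^ k)⁻¹ = finRotate 4 := by
      rw [hc.eq, mul_inv_cancel_right]
    calc g * finRotate 4 * g⁻¹
        = g * ((finRotate 4 ^ k) * finRotate 4 * (finRotate 4 ^ k)⁻¹) * g⁻¹ := by rw [key]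
      _ = g * finRotate 4 ^ k * finRotate 4 * (g * finRotate 4 ^ k)⁻¹ := by group)

/-- The ROLO(x,1) score of a ballot `(a, r, l)` against a cyclic order with
successor permutation `τ`: `x` points if both `τ a = l` and `τ r = a` hold,
`1` point if exactly one of them holds, and `0` points otherwise. -/
def score (x : ℚ) (τ : Equiv.Perm (Fin 4)) (t : Fin 4 × Fin 4 × Fin 4) : ℚ :=
  if τ t.1 = t.2.2 ∧ τ t.2.1 = t.1 then x
  else if τ t.1 = t.2.2 ∨ τ t.2.1 = t.1 then 1
  else 0

/-!
Each point of a 4-cycle `σ` has two neighbours, `σ a` and `σ⁻¹ a`, and one opposite point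
`σ (σ a)`. If 4-cycles `σ` and `τ` share one opposite pair, then `τ = σ` or `τ = σ⁻¹`. Otherwise
exactly one `τ`-neighbour of each `a` is a `σ`-neighbour of `a`, so the two ballots at `a` that
fully match `σ` or `σ⁻¹` contain exactly one correct adjacency of `τ` and contribute `1` in total.
If `τ = σ` or `τ = σ⁻¹`, one of these two ballots is fully correct for `τ` and the other fully
wrong, so they contribute `x`. Summing over `a`, the eight ballots of `σ` score `4x` if
`τ = σ` or `τ = σ⁻¹` and `4` otherwise; the total score is a difference of two such sums.
-/

open Equiv Finset

/-- Equality up to inversion in a group. For successor permutations this is equality of cyclic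
orders up to reversal. -/
def EqOrInv {G : Type*} [Group G] (g h : G) : Prop :=
  g = h ∨ g = h⁻¹

namespace EqOrInv

variable {G : Type*} [Group G] {g h k : G}

theorem symm : EqOrInv g h → EqOrInv h g := by
  rintro (rfl | rfl)
  · exact .inl rfl
  · exact .inr (inv_inv h).symm

theorem trans : EqOrInv g h → EqOrInv h k → EqOrInv g k := by
  rintro (rfl | rfl) (rfl | rfl)
  · exact .inl rfl
  · exact .inr rfl
  · exact .inr rfl
  · exact .inl (inv_inv k)

end EqOrInv

section Cycles

variable {α : Type*} {σ τ : Perm α}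

theorem mem_zpowers_of_commute_of_isCycleOn_univ (hτ : τ.IsCycleOn Set.univ)
    (hστ : Commute σ τ) : σ ∈ Subgroup.zpowers τ := by
  rcases isEmpty_or_nonempty α with _ | ⟨⟨a⟩⟩
  · exact Subsingleton.elim 1 σ ▸ one_mem _
  obtain ⟨k, hk⟩ : τ.SameCycle a (σ a) := hτ.2 (Set.mem_univ _) (Set.mem_univ _)
  refine ⟨k, Perm.ext fun b => ?_⟩
  obtain ⟨m, rfl⟩ : τ.SameCycle a b := hτ.2 (Set.mem_univ _) (Set.mem_univ _)
  calc (τ ^ k) ((τ ^ m) a) = (τ ^ m) ((τ ^ k) a) := by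
        rw [← Perm.mul_apply, ← Perm.mul_apply, zpow_mul_comm]
    _ = (τ ^ m) (σ a) := by rw [hk]
    _ = σ ((τ ^ m) a) := by rw [← Perm.mul_apply, ← Perm.mul_apply, (hστ.zpow_right m).eq]

theorem isCycleOn_univ_conj (hτ : τ.IsCycleOn Set.univ) (g : Perm α) :
    (g * τ * g⁻¹).IsCycleOn Set.univ := by
  simpa only [Set.image_univ, g.range_eq_univ] using hτ.conj (g := g)

theorem isCycleOn_univ_finRotate (n : ℕ) : (finRotate (n + 2)).IsCycleOn Set.univ := by
  have hmoved : {i | finRotate (n + 2) i ≠ i} = Set.univ := by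
    rw [← Perm.coe_support_eq_set_support, support_finRotate, coe_univ]
  exact hmoved ▸ isCycle_finRotate.isCycleOn

variable [Fintype α]

theorem pow_apply_eq_self_iff_card_dvd (hτ : τ.IsCycleOn Set.univ) (a : α) (n : ℕ) :
    (τ ^ n) a = a ↔ Fintype.card α ∣ n := by
  rw [← coe_univ] at hτ
  exact hτ.pow_apply_eq (mem_univ a)

theorem apply_ne_self (hα : 1 < Fintype.card α) (hτ : τ.IsCycleOn Set.univ) (a : α) :
    τ a ≠ a := by
  have := Fintype.one_lt_card_iff_nontrivial.mp hα
  exact hτ.apply_ne Set.nontrivial_univ (Set.mem_univ a)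

theorem apply_apply_ne_self (hα : 2 < Fintype.card α) (hτ : τ.IsCycleOn Set.univ) (a : α) :
    τ (τ a) ≠ a := fun hsq =>
  hα.not_ge (Nat.le_of_dvd two_pos ((pow_apply_eq_self_iff_card_dvd hτ a 2).mp hsq))

theorem apply_ne_inv_apply (hα : 2 < Fintype.card α) (hτ : τ.IsCycleOn Set.univ) (a : α) :
    τ a ≠ τ⁻¹ a :=
  fun h => apply_apply_ne_self hα hτ a (Perm.eq_inv_iff_eq.mp h)

variable (hα : Fintype.card α = 4) (hσ : σ.IsCycleOn Set.univ) (hτ : τ.IsCycleOn Set.univ)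
include hα hτ

theorem apply_apply_apply_eq_inv_apply (a : α) : τ (τ (τ a)) = τ⁻¹ a := by
  rw [Perm.eq_inv_iff_eq]
  exact (pow_apply_eq_self_iff_card_dvd hτ a 4).mpr hα.dvd

theorem eq_or_neighbour_or_opposite (a b : α) :
    b = a ∨ b = τ a ∨ b = τ⁻¹ a ∨ b = τ (τ a) := by
  have hcycle : τ.IsCycleOn (univ : Finset α) := by rwa [coe_univ]
  obtain ⟨k, hk, rfl⟩ := hcycle.exists_pow_eq (mem_univ a) (mem_univ b)
  rw [card_univ, hα] at hk
  interval_cases k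
  · exact .inl rfl
  · exact .inr (.inl rfl)
  · exact .inr (.inr (.inr rfl))
  · exact .inr (.inr (.inl (apply_apply_apply_eq_inv_apply hα hτ a)))

theorem inv_apply_inv_apply_eq_apply_apply (a : α) : τ⁻¹ (τ⁻¹ a) = τ (τ a) := by
  rw [← apply_apply_apply_eq_inv_apply hα hτ a, Perm.inv_def, τ.symm_apply_apply]

theorem neighbour_iff_ne_opposite {a b : α} (hb : b ≠ a) :
    b = τ a ∨ b = τ⁻¹ a ↔ b ≠ τ (τ a) := by
  refine ⟨?_, fun hopp => ?_⟩
  · rintro (rfl | rfl)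
    · exact (apply_ne_self (by lia) hτ (τ a)).symm
    · exact apply_apply_apply_eq_inv_apply hα hτ a ▸ apply_ne_self (by lia) hτ (τ (τ a))
  · have hcases := eq_or_neighbour_or_opposite hα hτ a b
    tauto

include hσ

theorem eq_of_apply_eq_of_apply_apply_eq {a : α} (hnext : τ a = σ a)
    (hopp : τ (τ a) = σ (σ a)) : τ = σ := by
  have hthree : τ (τ (τ a)) = τ⁻¹ a := apply_apply_apply_eq_inv_apply hα hτ a
  have hprev : τ⁻¹ a = σ⁻¹ a := by
    have hself : τ⁻¹ a ≠ a := apply_ne_self (by lia) (Perm.isCycleOn_inv.mpr hτ) a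
    have hne : τ⁻¹ a ≠ σ a := hnext ▸ (apply_ne_inv_apply (by lia) hτ a).symm
    have hne_opp : τ⁻¹ a ≠ σ (σ a) :=
      hopp ▸ (neighbour_iff_ne_opposite hα hτ hself).mp (.inr rfl)
    exact ((neighbour_iff_ne_opposite hα hσ hself).mpr hne_opp).resolve_left hne
  ext b
  rcases eq_or_neighbour_or_opposite hα hσ a b with rfl | rfl | rfl | rfl
  · rw [hnext]
  · rw [← hopp, hnext]
  · calc τ (σ⁻¹ a) = τ (τ⁻¹ a) := by rw [hprev]
      _ = a := τ.apply_symm_apply a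
      _ = σ (σ⁻¹ a) := (σ.apply_symm_apply a).symm
  · calc τ (σ (σ a)) = τ⁻¹ a := by rw [← hopp, hthree]
      _ = σ (σ (σ a)) := by rw [hprev, apply_apply_apply_eq_inv_apply hα hσ]

theorem eqOrInv_of_apply_apply_eq {a : α} (hopp : τ (τ a) = σ (σ a)) : EqOrInv τ σ := by
  have hself : τ a ≠ a := apply_ne_self (by lia) hτ a
  have hne_opp : τ a ≠ σ (σ a) := hopp ▸ (apply_ne_self (by lia) hτ (τ a)).symm
  rcases (neighbour_iff_ne_opposite hα hσ hself).mpr hne_opp with hnext | hprev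
  · exact .inl (eq_of_apply_eq_of_apply_apply_eq hα hσ hτ hnext hopp)
  · refine .inr (eq_of_apply_eq_of_apply_apply_eq hα (Perm.isCycleOn_inv.mpr hσ) hτ hprev ?_)
    rw [hopp, inv_apply_inv_apply_eq_apply_apply hα hσ]

theorem xor_neighbour_of_not_eqOrInv (hτσ : ¬ EqOrInv τ σ) (a : α) :
    Xor (τ a = σ a ∨ τ a = σ⁻¹ a) (τ⁻¹ a = σ a ∨ τ⁻¹ a = σ⁻¹ a) := by
  have hopp : σ (σ a) ≠ τ (τ a) := fun h => hτσ (eqOrInv_of_apply_apply_eq hα hσ hτ h.symm)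
  have hopp_neighbour : σ (σ a) = τ a ∨ σ (σ a) = τ⁻¹ a :=
    (neighbour_iff_ne_opposite hα hτ (apply_apply_ne_self (by lia) hσ a)).mpr hopp
  have hne : τ a ≠ τ⁻¹ a := apply_ne_inv_apply (by lia) hτ a
  rw [neighbour_iff_ne_opposite hα hσ (apply_ne_self (by lia) hτ a),
    neighbour_iff_ne_opposite hα hσ (apply_ne_self (by lia) (Perm.isCycleOn_inv.mpr hτ) a)]
  rcases hopp_neighbour with h | h <;> rw [h]
  · exact .inr ⟨hne.symm, not_not.mpr rfl⟩
  · exact .inl ⟨hne, not_not.mpr rfl⟩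

end Cycles

section MatchingBallots

variable {α : Type*} [Fintype α] [DecidableEq α] {σ τ : Perm α}

/-- The triples `(a, r, l)` in which `r` and `l` are the predecessor and the successor of `a`
under `τ`, in either order: the ballots fully matching `τ` or its reversal. -/
def matchingBallots (τ : Perm α) : Finset (α × α × α) :=
  univ.image (fun a => (a, τ⁻¹ a, τ a)) ∪ univ.image (fun a => (a, τ a, τ⁻¹ a))

theorem mem_matchingBallots {t : α × α × α} :
    t ∈ matchingBallots τ ↔ ∃ a, t = (a, τ⁻¹ a, τ a) ∨ t = (a, τ a, τ⁻¹ a) := by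
  simp only [matchingBallots, mem_union, mem_image, mem_univ, true_and, exists_or, eq_comm]

theorem sum_matchingBallots {M : Type*} [AddCommMonoid M] (hτ : ∀ a, τ a ≠ τ⁻¹ a)
    (f : α × α × α → M) :
    ∑ t ∈ matchingBallots τ, f t = ∑ a, (f (a, τ⁻¹ a, τ a) + f (a, τ a, τ⁻¹ a)) := by
  have hdisj : Disjoint (univ.image fun a => (a, τ⁻¹ a, τ a))
      (univ.image fun a => (a, τ a, τ⁻¹ a)) := by
    simp only [disjoint_left, mem_image, mem_univ, true_and, not_exists]
    rintro _ ⟨a, rfl⟩ b hb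
    simp only [Prod.mk.injEq] at hb
    exact hτ a (hb.1 ▸ hb.2.1)
  rw [matchingBallots, sum_union hdisj, sum_image, sum_image, sum_add_distrib]
  all_goals exact fun a _ b _ hab => congrArg Prod.fst hab

theorem pairwise_ne_of_mem_matchingBallots (hα : 2 < Fintype.card α)
    (hτ : τ.IsCycleOn Set.univ) {t : α × α × α} (ht : t ∈ matchingBallots τ) :
    t.1 ≠ t.2.1 ∧ t.1 ≠ t.2.2 ∧ t.2.1 ≠ t.2.2 := by
  have hnext : ∀ a, τ a ≠ a := apply_ne_self (by lia) hτ
  have hprev : ∀ a, τ⁻¹ a ≠ a := apply_ne_self (by lia) (Perm.isCycleOn_inv.mpr hτ)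
  have hne : ∀ a, τ a ≠ τ⁻¹ a := apply_ne_inv_apply hα hτ
  obtain ⟨a, rfl | rfl⟩ := mem_matchingBallots.mp ht
  · exact ⟨(hprev a).symm, (hnext a).symm, (hne a).symm⟩
  · exact ⟨(hnext a).symm, (hprev a).symm, hne a⟩

theorem disjoint_matchingBallots (hα : Fintype.card α = 4) (hσ : σ.IsCycleOn Set.univ)
    (hτ : τ.IsCycleOn Set.univ) (hτσ : ¬ EqOrInv τ σ) :
    Disjoint (matchingBallots σ) (matchingBallots τ) := by
  rw [disjoint_left]
  intro t htσ htτ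
  obtain ⟨a, ha⟩ := mem_matchingBallots.mp htσ
  obtain ⟨b, hb⟩ := mem_matchingBallots.mp htτ
  have hneighbours : (τ a = σ a ∨ τ a = σ⁻¹ a) ∧ (τ⁻¹ a = σ a ∨ τ⁻¹ a = σ⁻¹ a) := by grind
  have hxor := xor_neighbour_of_not_eqOrInv hα hσ hτ hτσ a
  exact (xor_iff_or_and_not_and _ _).mp hxor |>.2 hneighbours

end MatchingBallots

theorem sum_subtype_mul_eq_sum_sub_sum {ι R : Type*} [Ring R] {P : ι → Prop}
    [Fintype (Subtype P)] {s t : Finset ι} (hs : ∀ i ∈ s, P i)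
    (ht : ∀ i ∈ t, P i) (hst : Disjoint s t) {p : Subtype P → R} (hp_one : ∀ b, b.1 ∈ s → p b = 1)
    (hp_neg_one : ∀ b, b.1 ∈ t → p b = -1) (hp_zero : ∀ b, b.1 ∉ s → b.1 ∉ t → p b = 0)
    (f : ι → R) : ∑ b, p b * f b.1 = ∑ i ∈ s, f i - ∑ i ∈ t, f i := by
  classical
  rw [← sum_subtype_of_mem f hs, ← sum_subtype_of_mem f ht,
    ← sum_ite_mem_eq (s.subtype P), ← sum_ite_mem_eq (t.subtype P), ← sum_sub_distrib]
  simp only [mem_subtype]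
  refine sum_congr rfl fun b _ => ?_
  by_cases hbs : b.1 ∈ s
  · have hbt : b.1 ∉ t := disjoint_left.mp hst hbs
    rw [hp_one b hbs, if_pos hbs, if_neg hbt, one_mul, sub_zero]
  · by_cases hbt : b.1 ∈ t
    · rw [hp_neg_one b hbt, if_neg hbs, if_pos hbt, neg_one_mul, zero_sub]
    · rw [hp_zero b hbs hbt, if_neg hbs, if_neg hbt, zero_mul, sub_zero]

section Score

theorem score_mk (x : ℚ) (τ : Perm (Fin 4)) (a r l : Fin 4) :
    score x τ (a, r, l) =
      if τ a = l ∧ τ⁻¹ a = r then x else if τ a = l ∨ τ⁻¹ a = r then 1 else 0 := by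
  simp only [score, Perm.inv_eq_iff_eq, eq_comm (a := a)]

variable {σ τ : Perm (Fin 4)} (hσ : σ.IsCycleOn Set.univ) (hτ : τ.IsCycleOn Set.univ) (x : ℚ)
include hσ

theorem score_add_score_of_eqOrInv (hτσ : EqOrInv τ σ) (a : Fin 4) :
    score x τ (a, σ⁻¹ a, σ a) + score x τ (a, σ a, σ⁻¹ a) = x := by
  have hne : σ a ≠ σ⁻¹ a := apply_ne_inv_apply (by simp) hσ a
  rw [score_mk, score_mk]
  rcases hτσ with rfl | rfl
  · simp only [hne, hne.symm, and_self, or_self, if_true, if_false, add_zero]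
  · simp only [inv_inv, hne, hne.symm, and_self, or_self, if_true, if_false, zero_add]

theorem sum_score_of_eqOrInv (hτσ : EqOrInv τ σ) :
    ∑ t ∈ matchingBallots σ, score x τ t = 4 * x := by
  rw [sum_matchingBallots (apply_ne_inv_apply (by simp) hσ)]
  simp only [score_add_score_of_eqOrInv hσ x hτσ, Fin.sum_const, nsmul_eq_mul, Nat.cast_ofNat]

include hτ

theorem score_add_score_of_not_eqOrInv (hτσ : ¬ EqOrInv τ σ) (a : Fin 4) :
    score x τ (a, σ⁻¹ a, σ a) + score x τ (a, σ a, σ⁻¹ a) = 1 := by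
  have hne : σ a ≠ σ⁻¹ a := apply_ne_inv_apply (by simp) hσ a
  rw [score_mk, score_mk]
  have hxor := xor_neighbour_of_not_eqOrInv (Fintype.card_fin 4) hσ hτ hτσ a
  grind

theorem sum_score_of_not_eqOrInv (hτσ : ¬ EqOrInv τ σ) :
    ∑ t ∈ matchingBallots σ, score x τ t = 4 := by
  rw [sum_matchingBallots (apply_ne_inv_apply (by simp) hσ)]
  simp only [score_add_score_of_not_eqOrInv hσ hτ x hτσ, Fin.sum_const, nsmul_eq_mul,
    Nat.cast_ofNat, mul_one]

end Score

section SuccPerm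

theorem isCycleOn_succPerm (y : CO 4) : (succPerm y).IsCycleOn Set.univ := by
  induction y using QuotientGroup.induction_on with
  | H g => exact isCycleOn_univ_conj (isCycleOn_univ_finRotate 2) g

theorem succPerm_injective : Function.Injective succPerm := by
  intro y z hyz
  induction y using QuotientGroup.induction_on with | H g => ?_
  induction z using QuotientGroup.induction_on with | H h => ?_
  have hconj : g * finRotate 4 * g⁻¹ = h * finRotate 4 * h⁻¹ := hyz
  refine QuotientGroup.eq.mpr
    (mem_zpowers_of_commute_of_isCycleOn_univ (isCycleOn_univ_finRotate 2) ?_)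
  calc g⁻¹ * h * finRotate 4 = g⁻¹ * (h * finRotate 4 * h⁻¹) * h := by group
    _ = finRotate 4 * (g⁻¹ * h) := by rw [← hconj]; group

theorem eqOrInv_succPerm_iff {y z : CO 4} :
    EqOrInv (succPerm y) (succPerm z) ↔ y = z ∨ succPerm y = (succPerm z)⁻¹ :=
  or_congr_left succPerm_injective.eq_iff

end SuccPerm

theorem stmt_19 (x : ℚ) (y₀ y₁ : CO 4)
    (hy : y₁ ≠ y₀ ∧ succPerm y₁ ≠ (succPerm y₀)⁻¹) (p : Ballot → ℚ)
    (hp1 : ∀ b : Ballot,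
      (∃ a : Fin 4, (b : Fin 4 × Fin 4 × Fin 4) = (a, (succPerm y₀)⁻¹ a, succPerm y₀ a) ∨
        (b : Fin 4 × Fin 4 × Fin 4) = (a, succPerm y₀ a, (succPerm y₀)⁻¹ a)) →
      p b = 1)
    (hp2 : ∀ b : Ballot,
      (∃ a : Fin 4, (b : Fin 4 × Fin 4 × Fin 4) = (a, (succPerm y₁)⁻¹ a, succPerm y₁ a) ∨
        (b : Fin 4 × Fin 4 × Fin 4) = (a, succPerm y₁ a, (succPerm y₁)⁻¹ a)) →
      p b = -1)
    (hp0 : ∀ b : Ballot,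
      (¬ ∃ a : Fin 4, (b : Fin 4 × Fin 4 × Fin 4) = (a, (succPerm y₀)⁻¹ a, succPerm y₀ a) ∨
        (b : Fin 4 × Fin 4 × Fin 4) = (a, succPerm y₀ a, (succPerm y₀)⁻¹ a)) →
      (¬ ∃ a : Fin 4, (b : Fin 4 × Fin 4 × Fin 4) = (a, (succPerm y₁)⁻¹ a, succPerm y₁ a) ∨
        (b : Fin 4 × Fin 4 × Fin 4) = (a, succPerm y₁ a, (succPerm y₁)⁻¹ a)) →
      p b = 0)
    (y : CO 4) :
    ((y = y₀ ∨ succPerm y = (succPerm y₀)⁻¹) →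
      ∑ b : Ballot, p b * score x (succPerm y) (b : Fin 4 × Fin 4 × Fin 4) = 4 * (x - 1)) ∧
    ((y = y₁ ∨ succPerm y = (succPerm y₁)⁻¹) →
      ∑ b : Ballot, p b * score x (succPerm y) (b : Fin 4 × Fin 4 × Fin 4) = -(4 * (x - 1))) ∧
    ((y ≠ y₀ ∧ succPerm y ≠ (succPerm y₀)⁻¹ ∧ y ≠ y₁ ∧ succPerm y ≠ (succPerm y₁)⁻¹) →
      ∑ b : Ballot, p b * score x (succPerm y) (b : Fin 4 × Fin 4 × Fin 4) = 0) := by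
  have hτ₀ := isCycleOn_succPerm y₀
  have hτ₁ := isCycleOn_succPerm y₁
  have hτ := isCycleOn_succPerm y
  have hy₁₀ : ¬ EqOrInv (succPerm y₁) (succPerm y₀) := by
    rwa [eqOrInv_succPerm_iff, not_or]
  simp only [← mem_matchingBallots] at hp1 hp2 hp0
  rw [sum_subtype_mul_eq_sum_sub_sum
    (fun _ => pairwise_ne_of_mem_matchingBallots (by simp) hτ₀)
    (fun _ => pairwise_ne_of_mem_matchingBallots (by simp) hτ₁)
    (disjoint_matchingBallots (Fintype.card_fin 4) hτ₀ hτ₁ hy₁₀) hp1 hp2 hp0]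
  refine ⟨fun h => ?_, fun h => ?_, fun ⟨hne₀, hrev₀, hne₁, hrev₁⟩ => ?_⟩
  · have h₀ := eqOrInv_succPerm_iff.mpr h
    have h₁ : ¬ EqOrInv (succPerm y) (succPerm y₁) := fun h₁ => hy₁₀ (h₁.symm.trans h₀)
    rw [sum_score_of_eqOrInv hτ₀ x h₀, sum_score_of_not_eqOrInv hτ₁ hτ x h₁]
    ring
  · have h₁ := eqOrInv_succPerm_iff.mpr h
    have h₀ : ¬ EqOrInv (succPerm y) (succPerm y₀) := fun h₀ => hy₁₀ (h₁.symm.trans h₀)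
    rw [sum_score_of_not_eqOrInv hτ₀ hτ x h₀, sum_score_of_eqOrInv hτ₁ x h₁]
    ring
  · have h₀ := eqOrInv_succPerm_iff.not.mpr (not_or.mpr ⟨hne₀, hrev₀⟩)
    have h₁ := eqOrInv_succPerm_iff.not.mpr (not_or.mpr ⟨hne₁, hrev₁⟩)
    rw [sum_score_of_not_eqOrInv hτ₀ hτ x h₀, sum_score_of_not_eqOrInv hτ₁ hτ x h₁, sub_self]
end
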